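/- arXiv:1105.2474 — 2 statements merged into one kernel-verified Lean document; each statement's English description precedes it below -/
import Mathlib

section
/- Let A and B be real 3×3 matrices, let u, v ∈ ℝ³ be linearly independent, let ν = (u × v)/‖u × v‖, and let P = I₃ − ν νᵀ be the orthogonal projection onto the plane spanned by u and v. Define F(s,t) = ‖((I + sA + tB)u) × ((I + sA + tB)v)‖ for (s,t) ∈ ℝ². Then the mixed second partial derivative ∂²F/∂s∂t at (0,0) exists and equals ‖u × v‖ · ( −tr(P Bᵀ P Aᵀ) + (tr A − ⟨Aν, ν⟩)(tr B − ⟨Bν, ν⟩) + ⟨P Aᵀ ν, P Bᵀ ν⟩ ). -/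
/-!
The first variation of the area vector `w = u × v` is `Au × v + u × Av = C_A w`, where
`C_A = tr A • 1 - Aᵀ`. Applying this identity twice gives the mixed variation
`Au × Bv + Bu × Av = (C_A C_B - C_{AB}) w`. The mixed derivative of a norm is
`(⟪w_s, w_t⟫ + ⟪w, w_st⟫ - ⟪w, w_s⟫⟪w, w_t⟫ / ‖w‖²) / ‖w‖`. With `w = ‖w‖ ν`, the first and third
terms combine into the inner product of the tangential parts of `C_A ν` and `C_B ν`, which are
`-P Aᵀ ν` and `-P Bᵀ ν` because `P ν = 0`; the second term is `⟪ν, (C_A C_B - C_{AB}) ν⟫`, which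
is the product of the surface divergences minus the trace term.
-/

section NormDerivative

open Filter Topology
open scoped RealInnerProductSpace

variable {E : Type*} [NormedAddCommGroup E] [InnerProductSpace ℝ E]

theorem hasDerivAt_norm_of_ne_zero {f : ℝ → E} {f' : E} {x : ℝ} (hf : HasDerivAt f f' x)
    (hx : f x ≠ 0) : HasDerivAt (fun y => ‖f y‖) (⟪f x, f'⟫ / ‖f x‖) x := by
  have hsq : HasDerivAt (fun y => √(‖f y‖ ^ 2)) (2 * ⟪f x, f'⟫ / (2 * √(‖f x‖ ^ 2))) x :=
    hf.norm_sq.sqrt (pow_ne_zero 2 (norm_ne_zero_iff.2 hx))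
  simpa only [Real.sqrt_sq (norm_nonneg _), mul_div_mul_left _ _ (two_ne_zero' ℝ)] using hsq

theorem hasDerivAt_deriv_norm {f : ℝ → ℝ → E} {g : ℝ → E} {f' g' : E} {x y : ℝ}
    (hfg : ∀ᶠ s in 𝓝 x, HasDerivAt (f s) (g s) y) (hf : HasDerivAt (fun s => f s y) f' x)
    (hg : HasDerivAt g g' x) (hxy : f x y ≠ 0) :
    HasDerivAt (fun s => deriv (fun t => ‖f s t‖) y)
      ((⟪f', g x⟫ + ⟪f x y, g'⟫) / ‖f x y‖
        - ⟪f x y, f'⟫ * ⟪f x y, g x⟫ / ‖f x y‖ ^ 3) x := by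
  have hderiv : (fun s => deriv (fun t => ‖f s t‖) y) =ᶠ[𝓝 x] fun s => ⟪f s y, g s⟫ / ‖f s y‖ := by
    filter_upwards [hfg, hf.continuousAt.eventually_ne hxy] with s hs hsy
    exact (hasDerivAt_norm_of_ne_zero hs hsy).deriv
  have hnorm : ‖f x y‖ ≠ 0 := norm_ne_zero_iff.2 hxy
  have hquot := (hf.inner ℝ hg).fun_div (hasDerivAt_norm_of_ne_zero hf hxy) hnorm
  refine (hquot.congr_of_eventuallyEq hderiv).congr_deriv ?_
  field_simp
  ring

end NormDerivative

section CofactorVariation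

open scoped Matrix

variable {n R : Type*} [Fintype n] [DecidableEq n] [CommRing R]

/-- The derivative at the identity, in the direction `A`, of the cofactor matrix
`M ↦ (adjugate M)ᵀ`. For `3 × 3` matrices it maps `u × v` to the first variation of the area vector
under `u ↦ u + s A u`, `v ↦ v + s A v`. -/
def cofactorVariation (A : Matrix n n R) : Matrix n n R :=
  A.trace • 1 - Aᵀ

theorem cofactorVariation_mulVec (A : Matrix n n R) (x : n → R) :
    cofactorVariation A *ᵥ x = A.trace • x - Aᵀ *ᵥ x := by
  rw [cofactorVariation, Matrix.sub_mulVec, Matrix.smul_mulVec, Matrix.one_mulVec]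

theorem cross_mulVec_add_cross_mulVec (A : Matrix (Fin 3) (Fin 3) R) (u v : Fin 3 → R) :
    (A *ᵥ u) ⨯₃ v + u ⨯₃ (A *ᵥ v) = cofactorVariation A *ᵥ (u ⨯₃ v) := by
  rw [cofactorVariation_mulVec]
  ext i
  fin_cases i <;>
    simp only [cross_apply, Matrix.mulVec, dotProduct, Fin.sum_univ_three, Matrix.trace,
      Matrix.diag_apply, Matrix.transpose_apply, Pi.add_apply, Pi.sub_apply, Matrix.smul_cons,
      Matrix.smul_empty, smul_eq_mul, Matrix.cons_val, Fin.zero_eta, Fin.mk_one,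
      Fin.reduceFinMk] <;>
    ring

theorem mulVec_cross_mulVec_add (A B : Matrix (Fin 3) (Fin 3) R) (u v : Fin 3 → R) :
    (A *ᵥ u) ⨯₃ (B *ᵥ v) + (B *ᵥ u) ⨯₃ (A *ᵥ v) =
      (cofactorVariation A * cofactorVariation B - cofactorVariation (A * B)) *ᵥ (u ⨯₃ v) := by
  rw [Matrix.sub_mulVec, ← Matrix.mulVec_mulVec]
  simp only [← cross_mulVec_add_cross_mulVec, Matrix.mulVec_add, ← Matrix.mulVec_mulVec]
  abel

end CofactorVariation

section TangentialProjection

open scoped Matrix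

variable {n R : Type*} [Fintype n] [DecidableEq n] [CommRing R]

/-- The matrix `1 - ν νᵀ`. For a unit vector `ν` it is the orthogonal projection onto the hyperplane
normal to `ν`, the tangent plane of the surface. -/
def tangentialProjection (ν : n → R) : Matrix n n R :=
  1 - Matrix.vecMulVec ν ν

theorem tangentialProjection_mulVec (ν x : n → R) :
    tangentialProjection ν *ᵥ x = x - (ν ⬝ᵥ x) • ν := by
  rw [tangentialProjection, Matrix.sub_mulVec, Matrix.one_mulVec, Matrix.vecMulVec_mulVec,
    op_smul_eq_smul]

theorem tangentialProjection_mulVec_dotProduct {ν : n → R} (hν : ν ⬝ᵥ ν = 1) (x y : n → R) :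
    (tangentialProjection ν *ᵥ x) ⬝ᵥ (tangentialProjection ν *ᵥ y) =
      x ⬝ᵥ y - (ν ⬝ᵥ x) * (ν ⬝ᵥ y) := by
  simp only [tangentialProjection_mulVec, sub_dotProduct, dotProduct_sub, smul_dotProduct,
    dotProduct_smul, hν, smul_eq_mul, dotProduct_comm x ν]
  ring

theorem tangentialProjection_mulVec_cofactorVariation {ν : n → R} (hν : ν ⬝ᵥ ν = 1)
    (A : Matrix n n R) :
    tangentialProjection ν *ᵥ (cofactorVariation A *ᵥ ν) =
      -((tangentialProjection ν * Aᵀ) *ᵥ ν) := by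
  have hker : tangentialProjection ν *ᵥ ν = 0 := by
    rw [tangentialProjection_mulVec, hν, one_smul, sub_self]
  rw [cofactorVariation_mulVec, Matrix.mulVec_sub, Matrix.mulVec_smul, hker, smul_zero, zero_sub,
    Matrix.mulVec_mulVec]

theorem trace_tangentialProjection_mul (X Y : Matrix n n R) (ν : n → R) :
    (tangentialProjection ν * X * tangentialProjection ν * Y).trace =
      (X * Y).trace - ν ⬝ᵥ (X * Y) *ᵥ ν - ν ⬝ᵥ (Y * X) *ᵥ ν + (ν ⬝ᵥ X *ᵥ ν) * (ν ⬝ᵥ Y *ᵥ ν) := by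
  have htrace (Z : Matrix n n R) : (Matrix.vecMulVec ν ν * Z).trace = ν ⬝ᵥ Z *ᵥ ν := by
    rw [Matrix.trace_mul_comm, Matrix.mul_vecMulVec, Matrix.trace_vecMulVec, dotProduct_comm]
  have hcyclic : (X * Matrix.vecMulVec ν ν * Y).trace = (Matrix.vecMulVec ν ν * (Y * X)).trace := by
    rw [Matrix.trace_mul_cycle', Matrix.mul_assoc]
  have hrankOne : (Matrix.vecMulVec ν ν * (X * Matrix.vecMulVec ν ν * Y)).trace =
      (ν ⬝ᵥ X *ᵥ ν) * (ν ⬝ᵥ Y *ᵥ ν) := by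
    rw [htrace, ← Matrix.mulVec_mulVec, ← Matrix.mulVec_mulVec, Matrix.vecMulVec_mulVec,
      op_smul_eq_smul, Matrix.mulVec_smul, dotProduct_smul, smul_eq_mul, mul_comm]
  have hexpand : tangentialProjection ν * X * tangentialProjection ν * Y =
      X * Y - Matrix.vecMulVec ν ν * (X * Y) - X * Matrix.vecMulVec ν ν * Y
        + Matrix.vecMulVec ν ν * (X * Matrix.vecMulVec ν ν * Y) := by
    rw [tangentialProjection]
    noncomm_ring
  rw [hexpand, Matrix.trace_add, Matrix.trace_sub, Matrix.trace_sub, hrankOne, hcyclic, htrace,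
    htrace]

theorem dotProduct_cofactorVariation_mul_sub_mulVec {ν : n → R} (hν : ν ⬝ᵥ ν = 1)
    (A B : Matrix n n R) :
    ν ⬝ᵥ (cofactorVariation A * cofactorVariation B - cofactorVariation (A * B)) *ᵥ ν =
      -(tangentialProjection ν * Bᵀ * tangentialProjection ν * Aᵀ).trace
        + (A.trace - A *ᵥ ν ⬝ᵥ ν) * (B.trace - B *ᵥ ν ⬝ᵥ ν) := by
  have htranspose (M : Matrix n n R) : M *ᵥ ν ⬝ᵥ ν = ν ⬝ᵥ Mᵀ *ᵥ ν := by
    rw [Matrix.mulVec_transpose, dotProduct_comm, Matrix.dotProduct_mulVec, dotProduct_comm]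
  rw [trace_tangentialProjection_mul, htranspose, htranspose, ← Matrix.transpose_mul,
    Matrix.trace_transpose, Matrix.sub_mulVec, ← Matrix.mulVec_mulVec]
  simp only [cofactorVariation_mulVec, Matrix.transpose_mul, ← Matrix.mulVec_mulVec,
    Matrix.mulVec_sub, Matrix.mulVec_smul, dotProduct_sub, dotProduct_smul, smul_eq_mul, hν]
  ring

theorem secondVariation_eq_of_eq_smul {K : Type*} [Field K] {N : K} {w ν : n → K} (hN : N ≠ 0)
    (hν : ν ⬝ᵥ ν = 1) (hw : w = N • ν) (A B M : Matrix n n K) :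
    ((cofactorVariation A *ᵥ w) ⬝ᵥ (cofactorVariation B *ᵥ w) + w ⬝ᵥ M *ᵥ w) / N
        - (w ⬝ᵥ cofactorVariation A *ᵥ w) * (w ⬝ᵥ cofactorVariation B *ᵥ w) / N ^ 3 =
      N * (ν ⬝ᵥ M *ᵥ ν
        + (tangentialProjection ν * Aᵀ) *ᵥ ν ⬝ᵥ (tangentialProjection ν * Bᵀ) *ᵥ ν) := by
  have htangential := tangentialProjection_mulVec_dotProduct hν (cofactorVariation A *ᵥ ν)
    (cofactorVariation B *ᵥ ν)
  rw [tangentialProjection_mulVec_cofactorVariation hν,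
    tangentialProjection_mulVec_cofactorVariation hν, neg_dotProduct_neg] at htangential
  rw [htangential, hw]
  simp only [Matrix.mulVec_smul, smul_dotProduct, dotProduct_smul, smul_eq_mul]
  field_simp
  ring

end TangentialProjection

section AreaVariation

open Filter Topology
open scoped Matrix

theorem hasDerivAt_cross {𝕜 : Type*} [NontriviallyNormedField 𝕜] [CompleteSpace 𝕜]
    {f g : 𝕜 → Fin 3 → 𝕜} {f' g' : Fin 3 → 𝕜} {x : 𝕜}
    (hf : HasDerivAt f f' x) (hg : HasDerivAt g g' x) :
    HasDerivAt (fun y => f y ⨯₃ g y) (f x ⨯₃ g' + f' ⨯₃ g x) x :=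
  (crossProduct (R := 𝕜)).toContinuousBilinearMap.hasDerivAt_of_bilinear
    (fun _ => hf) fun _ => hg

theorem hasDerivAt_add_smul_mulVec {𝕜 m n : Type*} [NontriviallyNormedField 𝕜] [Finite m]
    [Fintype n] (M B : Matrix m n 𝕜) (u : n → 𝕜) (x : 𝕜) :
    HasDerivAt (fun t : 𝕜 => (M + t • B) *ᵥ u) (B *ᵥ u) x := by
  have := Fintype.ofFinite m
  simpa only [Matrix.add_mulVec, Matrix.smul_mulVec, one_smul, id_eq] using
    ((hasDerivAt_id x).smul_const (B *ᵥ u)).const_add (M *ᵥ u)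

theorem norm_toLp_eq_sqrt_dotProduct {ι : Type*} [Fintype ι] (x : ι → ℝ) :
    ‖WithLp.toLp 2 x‖ = √(x ⬝ᵥ x) := by
  rw [norm_eq_sqrt_real_inner, EuclideanSpace.inner_toLp_toLp, star_trivial]

theorem sqrt_dotProduct_self_ne_zero {ι : Type*} [Fintype ι] {x : ι → ℝ} (hx : x ≠ 0) :
    √(x ⬝ᵥ x) ≠ 0 := by
  rw [← norm_toLp_eq_sqrt_dotProduct]
  exact norm_ne_zero_iff.2 ((WithLp.toLp_eq_zero 2).not.2 hx)

theorem inv_sqrt_smul_dotProduct_self {ι : Type*} [Fintype ι] {x : ι → ℝ} (hx : x ≠ 0) :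
    ((√(x ⬝ᵥ x))⁻¹ • x) ⬝ᵥ ((√(x ⬝ᵥ x))⁻¹ • x) = 1 := by
  have hsq : √(x ⬝ᵥ x) ^ 2 = x ⬝ᵥ x :=
    Real.sq_sqrt (Finset.sum_nonneg fun i _ => mul_self_nonneg (x i))
  have hsqrt : √(x ⬝ᵥ x) ≠ 0 := sqrt_dotProduct_self_ne_zero hx
  rw [smul_dotProduct, dotProduct_smul, smul_eq_mul, smul_eq_mul, ← mul_assoc, ← hsq,
    Real.sqrt_sq (Real.sqrt_nonneg _)]
  field_simp

theorem hasDerivAt_deriv_sqrt_dotProduct_self {ι : Type*} [Fintype ι] {f : ℝ → ℝ → ι → ℝ}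
    {g : ℝ → ι → ℝ} {f' g' : ι → ℝ} {x y : ℝ}
    (hfg : ∀ᶠ s in 𝓝 x, HasDerivAt (f s) (g s) y) (hf : HasDerivAt (fun s => f s y) f' x)
    (hg : HasDerivAt g g' x) (hxy : f x y ≠ 0) :
    HasDerivAt (fun s => deriv (fun t => √(f s t ⬝ᵥ f s t)) y)
      ((f' ⬝ᵥ g x + f x y ⬝ᵥ g') / √(f x y ⬝ᵥ f x y)
        - (f x y ⬝ᵥ f') * (f x y ⬝ᵥ g x) / √(f x y ⬝ᵥ f x y) ^ 3) x := by
  have htoLp {h : ℝ → ι → ℝ} {h' : ι → ℝ} {z : ℝ} (hh : HasDerivAt h h' z) :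
      HasDerivAt (fun r => WithLp.toLp 2 (h r)) (WithLp.toLp 2 h') z :=
    (PiLp.hasFDerivAt_toLp (𝕜 := ℝ) 2 (h z)).comp_hasDerivAt z hh
  have hnorm := hasDerivAt_deriv_norm (hfg.mono fun _ => htoLp) (htoLp hf) (htoLp hg)
    ((WithLp.toLp_eq_zero 2).not.2 hxy)
  simpa only [norm_toLp_eq_sqrt_dotProduct, EuclideanSpace.inner_toLp_toLp, star_trivial,
    dotProduct_comm (g x), dotProduct_comm g', dotProduct_comm f' (f x y)] using hnorm

theorem hasDerivAt_deriv_sqrt_cross_dotProduct_self (A B : Matrix (Fin 3) (Fin 3) ℝ)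
    {u v w : Fin 3 → ℝ} (hw : u ⨯₃ v = w) (hw0 : w ≠ 0) :
    HasDerivAt (fun s : ℝ => deriv (fun t : ℝ =>
        √(((1 + s • A + t • B) *ᵥ u) ⨯₃ ((1 + s • A + t • B) *ᵥ v) ⬝ᵥ
          ((1 + s • A + t • B) *ᵥ u) ⨯₃ ((1 + s • A + t • B) *ᵥ v))) 0)
      (((cofactorVariation A *ᵥ w) ⬝ᵥ (cofactorVariation B *ᵥ w)
          + w ⬝ᵥ (cofactorVariation A * cofactorVariation B - cofactorVariation (A * B)) *ᵥ w)
            / √(w ⬝ᵥ w)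
        - (w ⬝ᵥ cofactorVariation A *ᵥ w) * (w ⬝ᵥ cofactorVariation B *ᵥ w)
            / √(w ⬝ᵥ w) ^ 3) 0 := by
  let area (s t : ℝ) : Fin 3 → ℝ := ((1 + s • A + t • B) *ᵥ u) ⨯₃ ((1 + s • A + t • B) *ᵥ v)
  let areaT (s : ℝ) : Fin 3 → ℝ :=
    ((1 + s • A) *ᵥ u) ⨯₃ (B *ᵥ v) + (B *ᵥ u) ⨯₃ ((1 + s • A) *ᵥ v)
  have hT (s : ℝ) : HasDerivAt (area s) (areaT s) 0 := by
    simpa using hasDerivAt_cross (hasDerivAt_add_smul_mulVec (1 + s • A) B u 0)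
      (hasDerivAt_add_smul_mulVec (1 + s • A) B v 0)
  have hS : HasDerivAt (fun s => area s 0) (u ⨯₃ (A *ᵥ v) + (A *ᵥ u) ⨯₃ v) 0 := by
    simpa [area] using hasDerivAt_cross (hasDerivAt_add_smul_mulVec 1 A u 0)
      (hasDerivAt_add_smul_mulVec 1 A v 0)
  have hST : HasDerivAt areaT ((A *ᵥ u) ⨯₃ (B *ᵥ v) + (B *ᵥ u) ⨯₃ (A *ᵥ v)) 0 := by
    simpa using (hasDerivAt_cross (hasDerivAt_add_smul_mulVec 1 A u 0)
        (hasDerivAt_const 0 (B *ᵥ v))).fun_add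
      (hasDerivAt_cross (hasDerivAt_const 0 (B *ᵥ u)) (hasDerivAt_add_smul_mulVec 1 A v 0))
  have harea : area 0 0 = w := by simpa [area] using hw
  have hareaT : areaT 0 = cofactorVariation B *ᵥ w := by
    rw [← hw, ← cross_mulVec_add_cross_mulVec]
    simp [areaT, add_comm]
  rw [add_comm, cross_mulVec_add_cross_mulVec, hw] at hS
  rw [mulVec_cross_mulVec_add, hw] at hST
  simpa only [harea, hareaT] using
    hasDerivAt_deriv_sqrt_dotProduct_self (.of_forall hT) hS hST (harea ▸ hw0)

end AreaVariation

open Matrix in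
/-- Pointwise (d = 3) form of the second-order shape derivative of the surface Jacobian
at `r = 0`: the mixed second partial `∂²F/∂s∂t(0,0)` of
`F(s,t) = ‖((I+sA+tB)u) × ((I+sA+tB)v)‖` equals
`‖u×v‖ (−tr(PBᵀPAᵀ) + (trA − ⟨Aν,ν⟩)(trB − ⟨Bν,ν⟩) + ⟨PAᵀν, PBᵀν⟩)`. -/
theorem stmt6 (A B : Matrix (Fin 3) (Fin 3) ℝ) (u v : Fin 3 → ℝ)
    (huv : LinearIndependent ℝ ![u, v])
    (ν : Fin 3 → ℝ)
    (hν : ν = (Real.sqrt (crossProduct u v ⬝ᵥ crossProduct u v))⁻¹ • crossProduct u v)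
    (P : Matrix (Fin 3) (Fin 3) ℝ) (hP : P = 1 - vecMulVec ν ν)
    (F : ℝ → ℝ → ℝ)
    (hF : ∀ s t : ℝ, F s t =
      Real.sqrt
        (crossProduct ((1 + s • A + t • B).mulVec u) ((1 + s • A + t • B).mulVec v) ⬝ᵥ
          crossProduct ((1 + s • A + t • B).mulVec u) ((1 + s • A + t • B).mulVec v))) :
    HasDerivAt (fun s : ℝ => deriv (fun t : ℝ => F s t) 0)
      (Real.sqrt (crossProduct u v ⬝ᵥ crossProduct u v) *
        (-(P * Bᵀ * P * Aᵀ).trace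
          + (A.trace - A.mulVec ν ⬝ᵥ ν) * (B.trace - B.mulVec ν ⬝ᵥ ν)
          + (P * Aᵀ).mulVec ν ⬝ᵥ (P * Bᵀ).mulVec ν)) 0 := by
  have hw : crossProduct u v ≠ 0 := crossProduct_ne_zero_iff_linearIndependent.2 huv
  have hN : √(crossProduct u v ⬝ᵥ crossProduct u v) ≠ 0 := sqrt_dotProduct_self_ne_zero hw
  have hwν : crossProduct u v = √(crossProduct u v ⬝ᵥ crossProduct u v) • ν := by
    rw [hν, smul_inv_smul₀ hN]
  have hνν : ν ⬝ᵥ ν = 1 := hν ▸ inv_sqrt_smul_dotProduct_self hw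
  have hPν : P = tangentialProjection ν := hP
  simp only [hF]
  refine (hasDerivAt_deriv_sqrt_cross_dotProduct_self A B rfl hw).congr_deriv ?_
  rw [secondVariation_eq_of_eq_smul hN hνν hwν,
    dotProduct_cofactorVariation_mul_sub_mulVec hνν, hPν]
end

section
/- Let κ_s, κ_p ∈ ℂ \ {0}. For κ ∈ ℂ define g_κ : ℝ³ \ {0} → ℂ by g_κ(z) = exp(iκ‖z‖)/(4π‖z‖). Define the matrix-valued function E on ℝ³ \ {0} by E(z) = g_{κ_s}(z) I₃ + κ_s^{-2} H(z), where H(z) is the Hessian matrix of g_{κ_s} − g_{κ_p} at z, i.e. H(z)_{ij} = ∂_i∂_j (g_{κ_s} − g_{κ_p})(z). Then for every z ≠ 0 and every j ∈ {1,2,3}, Σ_{i=1}^{3} ∂_{z_i} E_{ij}(z) = (κ_p²/κ_s²) ∂_{z_j} g_{κ_p}(z); that is, the (column-wise) divergence of E equals (κ_p²/κ_s²) ∇g_{κ_p}. -/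
/-- The acoustic fundamental solution `g_κ(z) = e^{iκ|z|}/(4π|z|)` in ℝ³. -/
noncomputable def gker (κ : ℂ) (z : EuclideanSpace ℝ (Fin 3)) : ℂ :=
  Complex.exp (Complex.I * κ * (‖z‖ : ℂ)) / (4 * (Real.pi : ℂ) * (‖z‖ : ℂ))

/-- The Hessian matrix `H(z)_{ij} = ∂ᵢ∂ⱼ(g_{κs} − g_{κp})(z)`. -/
noncomputable def Hker (κs κp : ℂ) (z : EuclideanSpace ℝ (Fin 3)) :
    Matrix (Fin 3) (Fin 3) ℂ :=
  Matrix.of fun i j =>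
    fderiv ℝ (fun y => fderiv ℝ (fun x => gker κs x - gker κp x) y
      (EuclideanSpace.single j 1)) z (EuclideanSpace.single i 1)

/-- The (rescaled) elastodynamic fundamental solution `E(z) = g_{κs}(z) I₃ + κs⁻² H(z)`. -/
noncomputable def Eker (κs κp : ℂ) (z : EuclideanSpace ℝ (Fin 3)) :
    Matrix (Fin 3) (Fin 3) ℂ :=
  gker κs z • (1 : Matrix (Fin 3) (Fin 3) ℂ) + (κs ^ 2)⁻¹ • Hker κs κp z

/-!
The divergence of a Hessian is the gradient of the Laplacian, since partial derivatives commute.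
If `Δu = -κs² u` and `Δw = -κp² w`, then `div (κs⁻² Hess (u - w)) = -∇u + (κp² / κs²) ∇w`, and the
first term cancels the divergence `∇u` of `u I`. The kernels `g_κ` solve the Helmholtz equation off
the origin, because the radial Laplacian in `ℝ³` is `f'' + (2 / r) f'` and
`f r = e^{iκr} / (4πr)` satisfies `f' = (iκ - 1 / r) f`.
-/

open Module
open scoped InnerProductSpace Laplacian Topology

section SecondDerivatives

variable {E F : Type*} [NormedAddCommGroup E] [NormedSpace ℝ E]
  [NormedAddCommGroup F] [NormedSpace ℝ F]

lemma contDiffAt_fderiv_apply {n : WithTop ℕ∞} {u : E → F} {x : E}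
    (hu : ContDiffAt ℝ (n + 1) u x) (v : E) : ContDiffAt ℝ n (fun y => fderiv ℝ u y v) x :=
  (hu.fderiv_right le_rfl).clm_apply contDiffAt_const

lemma differentiableAt_fderiv_of_contDiffAt {u : E → F} {x : E}
    (hu : ContDiffAt ℝ 2 u x) : DifferentiableAt ℝ (fderiv ℝ u) x :=
  (hu.fderiv_right (m := 1) le_rfl).differentiableAt one_ne_zero

lemma fderiv_fderiv_apply_const {u : E → F} {x : E}
    (hu : DifferentiableAt ℝ (fderiv ℝ u) x) (v w : E) :
    fderiv ℝ (fun y => fderiv ℝ u y v) x w = fderiv ℝ (fderiv ℝ u) x w v := by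
  simp [fderiv_clm_apply hu (differentiableAt_const v)]

lemma fderiv_fderiv_apply_comm {u : E → F} {x : E}
    (hu : ContDiffAt ℝ 2 u x) (v w : E) :
    fderiv ℝ (fun y => fderiv ℝ u y v) x w = fderiv ℝ (fun y => fderiv ℝ u y w) x v := by
  have hdiff := differentiableAt_fderiv_of_contDiffAt hu
  rw [fderiv_fderiv_apply_const hdiff, fderiv_fderiv_apply_const hdiff]
  exact hu.isSymmSndFDerivAt (by simp) w v

end SecondDerivatives

section Laplacian

variable {E F : Type*} [NormedAddCommGroup E] [InnerProductSpace ℝ E] [FiniteDimensional ℝ E]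
  [NormedAddCommGroup F] [NormedSpace ℝ F]

lemma laplacian_eq_sum_fderiv_fderiv {ι : Type*} [Fintype ι] (b : OrthonormalBasis ι ℝ E)
    {u : E → F} {x : E} (hu : DifferentiableAt ℝ (fderiv ℝ u) x) :
    Δ u x = ∑ i, fderiv ℝ (fun y => fderiv ℝ u y (b i)) x (b i) := by
  simp [InnerProductSpace.laplacian_eq_iteratedFDeriv_orthonormalBasis u b,
    iteratedFDeriv_two_apply, fderiv_fderiv_apply_const hu]

lemma laplacian_fderiv_apply {u : E → F} {x : E} (hu : ContDiffAt ℝ 3 u x) (v : E) :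
    Δ (fun y => fderiv ℝ u y v) x = fderiv ℝ (Δ u) x v := by
  set b := stdOrthonormalBasis ℝ E
  have hD (w : E) : ContDiffAt ℝ 2 (fun y => fderiv ℝ u y w) x := contDiffAt_fderiv_apply hu w
  have hDD (w : E) : DifferentiableAt ℝ (fun y => fderiv ℝ (fun x => fderiv ℝ u x w) y w) x :=
    (contDiffAt_fderiv_apply (hD w) w).differentiableAt one_ne_zero
  have hC2 : ∀ᶠ y in 𝓝 x, ContDiffAt ℝ 2 u y :=
    (hu.of_le (by norm_num)).eventually (by simp)
  have hcomm (w : E) : (fun y => fderiv ℝ (fun x => fderiv ℝ u x v) y w) =ᶠ[𝓝 x]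
      fun y => fderiv ℝ (fun x => fderiv ℝ u x w) y v :=
    hC2.mono fun y hy => fderiv_fderiv_apply_comm hy v w
  have hlap : Δ u =ᶠ[𝓝 x] fun y => ∑ i, fderiv ℝ (fun x => fderiv ℝ u x (b i)) y (b i) :=
    hC2.mono fun y hy => laplacian_eq_sum_fderiv_fderiv b
      (differentiableAt_fderiv_of_contDiffAt hy)
  calc Δ (fun y => fderiv ℝ u y v) x
      = ∑ i, fderiv ℝ (fun y => fderiv ℝ (fun x => fderiv ℝ u x v) y (b i)) x (b i) :=
        laplacian_eq_sum_fderiv_fderiv b (differentiableAt_fderiv_of_contDiffAt (hD v))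
    _ = ∑ i, fderiv ℝ (fun y => fderiv ℝ (fun x => fderiv ℝ u x (b i)) y v) x (b i) := by
        simp only [(hcomm _).fderiv_eq]
    _ = ∑ i, fderiv ℝ (fun y => fderiv ℝ (fun x => fderiv ℝ u x (b i)) y (b i)) x v := by
        simp only [fderiv_fderiv_apply_comm (hD _) v]
    _ = fderiv ℝ (Δ u) x v := by
        rw [hlap.fderiv_eq, fderiv_fun_sum fun i _ => hDD (b i), sum_apply]

lemma fderiv_laplacian_sub_of_eigenfunctions {c d : ℂ} {u w : E → ℂ} {x : E}
    (hu : ContDiffAt ℝ 2 u x) (hw : ContDiffAt ℝ 2 w x)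
    (hΔu : ∀ᶠ y in 𝓝 x, Δ u y = c * u y) (hΔw : ∀ᶠ y in 𝓝 x, Δ w y = d * w y) :
    fderiv ℝ (Δ (u - w)) x = c • fderiv ℝ u x - d • fderiv ℝ w x := by
  have hΔ : Δ (u - w) =ᶠ[𝓝 x] fun y => c * u y - d * w y := by
    filter_upwards [hu.laplacian_sub_nhds hw, hΔu, hΔw] with y hy hyu hyw
    rw [hy, Pi.sub_apply, hyu, hyw]
  have hu' := hu.differentiableAt two_ne_zero
  have hw' := hw.differentiableAt two_ne_zero
  rw [hΔ.fderiv_eq, fderiv_fun_sub (hu'.const_mul c) (hw'.const_mul d), fderiv_const_mul hu',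
    fderiv_const_mul hw']

end Laplacian

section Radial

variable {E F : Type*} [NormedAddCommGroup E] [InnerProductSpace ℝ E]
  [NormedAddCommGroup F] [NormedSpace ℝ F]

lemma hasFDerivAt_norm_of_ne_zero {x : E} (hx : x ≠ 0) :
    HasFDerivAt (fun y : E => ‖y‖) (‖x‖⁻¹ • innerSL ℝ x) x := by
  have hsqrt := (hasStrictFDerivAt_norm_sq x).hasFDerivAt.sqrt (by positivity)
  simp only [Real.sqrt_sq (norm_nonneg _)] at hsqrt
  convert hsqrt using 1
  rw [two_nsmul, ← two_smul ℝ, smul_smul]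
  congr 1
  field_simp

lemma hasFDerivAt_comp_norm {f : ℝ → F} {f' : F} {x : E} (hf : HasDerivAt f f' ‖x‖)
    (hx : x ≠ 0) :
    HasFDerivAt (fun y => f ‖y‖) ((innerSL ℝ x).smulRight (‖x‖⁻¹ • f')) x := by
  refine (hf.hasFDerivAt.comp x (hasFDerivAt_norm_of_ne_zero hx)).congr_fderiv ?_
  ext v
  simp [smul_smul, mul_comm]

lemma contDiffAt_comp_norm {n : WithTop ℕ∞} {f : ℝ → F} {x : E} (hf : ContDiffAt ℝ n f ‖x‖)
    (hx : x ≠ 0) : ContDiffAt ℝ n (fun y => f ‖y‖) x :=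
  hf.comp x (contDiffAt_norm ℝ hx)

lemma fderiv_fderiv_comp_norm_apply_self {f : ℝ → F} {x : E} (hf : ContDiffAt ℝ 2 f ‖x‖)
    (hx : x ≠ 0) (v : E) :
    fderiv ℝ (fun y => fderiv ℝ (fun y => f ‖y‖) y v) x v =
      (‖v‖ ^ 2 / ‖x‖) • deriv f ‖x‖ +
        (⟪v, x⟫_ℝ ^ 2 / ‖x‖ ^ 2) • (deriv (deriv f) ‖x‖ - ‖x‖⁻¹ • deriv f ‖x‖) := by
  have hx' : ‖x‖ ≠ 0 := norm_ne_zero_iff.2 hx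
  have hfst : (fun y => fderiv ℝ (fun y => f ‖y‖) y v) =ᶠ[𝓝 x]
      fun y => ⟪v, y⟫_ℝ • (‖y‖⁻¹ • deriv f ‖y‖) := by
    have hC2 : ∀ᶠ y in 𝓝 x, ContDiffAt ℝ 2 f ‖y‖ :=
      continuous_norm.continuousAt.eventually (hf.eventually (by simp))
    filter_upwards [hC2, isOpen_ne.mem_nhds hx] with y hfy hy
    rw [(hasFDerivAt_comp_norm (hfy.differentiableAt two_ne_zero).hasDerivAt hy).fderiv]
    simp [real_inner_comm]
  have hderiv : HasDerivAt (deriv f) (deriv (deriv f) ‖x‖) ‖x‖ :=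
    ((contDiffAt_fderiv_apply hf 1).differentiableAt one_ne_zero).hasDerivAt
  have hprod := ((innerSL ℝ v).hasFDerivAt (x := x)).fun_smul
    (hasFDerivAt_comp_norm ((hasDerivAt_inv hx').fun_smul hderiv) hx)
  simp only [innerSL_apply_apply] at hprod
  rw [hfst.fderiv_eq, hprod.fderiv]
  simp only [add_apply, smul_apply, ContinuousLinearMap.smulRight_apply, innerSL_apply_apply,
    real_inner_comm v, real_inner_self_eq_norm_sq]
  match_scalars <;> field_simp
  ring

lemma laplacian_comp_norm [FiniteDimensional ℝ E] {f : ℝ → F} {x : E}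
    (hf : ContDiffAt ℝ 2 f ‖x‖) (hx : x ≠ 0) :
    Δ (fun y : E => f ‖y‖) x =
      deriv (deriv f) ‖x‖ + ((finrank ℝ E - 1) / ‖x‖) • deriv f ‖x‖ := by
  have hx' : ‖x‖ ≠ 0 := norm_ne_zero_iff.2 hx
  have hdiff : DifferentiableAt ℝ (fderiv ℝ fun y : E => f ‖y‖) x :=
    differentiableAt_fderiv_of_contDiffAt (contDiffAt_comp_norm hf hx)
  simp only [laplacian_eq_sum_fderiv_fderiv (stdOrthonormalBasis ℝ E) hdiff,
    fderiv_fderiv_comp_norm_apply_self hf hx, Finset.sum_add_distrib, ← Finset.sum_smul,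
    ← Finset.sum_div, OrthonormalBasis.sum_sq_inner_right, OrthonormalBasis.norm_eq_one,
    one_pow, Finset.sum_const, Finset.card_univ, Fintype.card_fin, nsmul_eq_mul, mul_one]
  match_scalars <;> field_simp
  ring

end Radial

section HelmholtzKernel

/-- The radial profile `r ↦ e^{iκr} / (4πr)` of the acoustic fundamental solution. -/
noncomputable def gkerProfile (κ : ℂ) (r : ℝ) : ℂ :=
  Complex.exp (Complex.I * κ * r) / (4 * (Real.pi : ℂ) * r)

lemma gker_eq_gkerProfile_comp_norm (κ : ℂ) : gker κ = fun z => gkerProfile κ ‖z‖ := rfl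

lemma contDiffAt_gkerProfile (κ : ℂ) {n : WithTop ℕ∞} {r : ℝ} (hr : r ≠ 0) :
    ContDiffAt ℝ n (gkerProfile κ) r := by
  have hofReal : ContDiffAt ℝ n (fun t : ℝ => (t : ℂ)) r := Complex.ofRealCLM.contDiff.contDiffAt
  have hden : 4 * (Real.pi : ℂ) * r ≠ 0 := by simp [hr, Real.pi_ne_zero]
  have hinv := ((contDiffAt_const (c := 4 * (Real.pi : ℂ))).mul hofReal).fun_inv hden
  exact (contDiffAt_const.mul hofReal).cexp.mul hinv

lemma hasDerivAt_gkerProfile (κ : ℂ) {r : ℝ} (hr : r ≠ 0) :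
    HasDerivAt (gkerProfile κ) ((Complex.I * κ - (r : ℂ)⁻¹) * gkerProfile κ r) r := by
  have hr' : (r : ℂ) ≠ 0 := Complex.ofReal_ne_zero.2 hr
  have hpi : (Real.pi : ℂ) ≠ 0 := Complex.ofReal_ne_zero.2 Real.pi_ne_zero
  have hid : HasDerivAt (fun t : ℝ => (t : ℂ)) 1 r := Complex.ofRealCLM.hasDerivAt
  refine ((hid.const_mul (Complex.I * κ)).cexp.div (hid.const_mul (4 * (Real.pi : ℂ)))
    (by simp [hr, hpi])).congr_deriv ?_
  rw [gkerProfile]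
  field_simp

lemma deriv_deriv_gkerProfile (κ : ℂ) {r : ℝ} (hr : r ≠ 0) :
    deriv (deriv (gkerProfile κ)) r =
      ((r : ℂ)⁻¹ ^ 2 + (Complex.I * κ - (r : ℂ)⁻¹) ^ 2) * gkerProfile κ r := by
  have hderiv : deriv (gkerProfile κ) =ᶠ[𝓝 r]
      fun t : ℝ => (Complex.I * κ - (t : ℂ)⁻¹) * gkerProfile κ t := by
    filter_upwards [isOpen_ne.mem_nhds hr] with t ht using (hasDerivAt_gkerProfile κ ht).deriv
  have hinv : HasDerivAt (fun t : ℝ => (t : ℂ)⁻¹) (-1 / (r : ℂ) ^ 2) r :=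
    HasDerivAt.fun_inv Complex.ofRealCLM.hasDerivAt (Complex.ofReal_ne_zero.2 hr)
  rw [hderiv.deriv_eq, ((hinv.const_sub _).fun_mul (hasDerivAt_gkerProfile κ hr)).deriv]
  ring

variable {z : EuclideanSpace ℝ (Fin 3)}

lemma contDiffAt_gker (κ : ℂ) {n : WithTop ℕ∞} (hz : z ≠ 0) : ContDiffAt ℝ n (gker κ) z :=
  contDiffAt_comp_norm (contDiffAt_gkerProfile κ (norm_ne_zero_iff.2 hz)) hz

lemma laplacian_gker (κ : ℂ) (hz : z ≠ 0) : Δ (gker κ) z = -κ ^ 2 * gker κ z := by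
  have hr : ‖z‖ ≠ 0 := norm_ne_zero_iff.2 hz
  calc Δ (gker κ) z
      = deriv (deriv (gkerProfile κ)) ‖z‖ + ((3 - 1) / ‖z‖ : ℝ) • deriv (gkerProfile κ) ‖z‖ := by
        rw [gker_eq_gkerProfile_comp_norm, laplacian_comp_norm (contDiffAt_gkerProfile κ hr) hz,
          finrank_euclideanSpace_fin, Nat.cast_ofNat]
    _ = ((‖z‖ : ℂ)⁻¹ ^ 2 + (Complex.I * κ - (‖z‖ : ℂ)⁻¹) ^ 2 +
          2 * (‖z‖ : ℂ)⁻¹ * (Complex.I * κ - (‖z‖ : ℂ)⁻¹)) * gkerProfile κ ‖z‖ := by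
        rw [deriv_deriv_gkerProfile κ hr, (hasDerivAt_gkerProfile κ hr).deriv, Complex.real_smul]
        push_cast
        ring
    _ = -κ ^ 2 * gkerProfile κ ‖z‖ := by
        linear_combination κ ^ 2 * gkerProfile κ ‖z‖ * Complex.I_sq

lemma eventually_laplacian_gker (κ : ℂ) (hz : z ≠ 0) :
    ∀ᶠ y in 𝓝 z, Δ (gker κ) y = -κ ^ 2 * gker κ y :=
  (isOpen_ne.eventually_mem hz).mono fun _ => laplacian_gker κ

end HelmholtzKernel

section ElastodynamicTensor

variable {ι F : Type*} [Fintype ι] [DecidableEq ι] [NormedAddCommGroup F] [NormedSpace ℝ F]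

/-- The Hessian matrix `(∂ᵢ∂ⱼ u)(x)` of a function on `ℝ^ι`, as iterated directional derivatives
along the standard basis. -/
noncomputable def hessianMatrix (u : EuclideanSpace ℝ ι → F) (x : EuclideanSpace ℝ ι) :
    Matrix ι ι F :=
  Matrix.of fun i j =>
    fderiv ℝ (fun y => fderiv ℝ u y (EuclideanSpace.single j 1)) x (EuclideanSpace.single i 1)

/-- The tensor `u I + κ⁻² Hess (u - w)`, which extends `Eker` to a shear solution `u` of the
Helmholtz equation with wave number `κ` and a pressure solution `w`, in any dimension. -/
noncomputable def elastodynamicTensor (κ : ℂ) (u w : EuclideanSpace ℝ ι → ℂ)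
    (x : EuclideanSpace ℝ ι) : Matrix ι ι ℂ :=
  u x • (1 : Matrix ι ι ℂ) + (κ ^ 2)⁻¹ • hessianMatrix (u - w) x

lemma Eker_eq_elastodynamicTensor (κs κp : ℂ) :
    Eker κs κp = elastodynamicTensor κs (gker κs) (gker κp) := rfl

variable {z : EuclideanSpace ℝ ι}

lemma differentiableAt_hessianMatrix_apply {u : EuclideanSpace ℝ ι → F}
    (hu : ContDiffAt ℝ 3 u z) (i j : ι) :
    DifferentiableAt ℝ (fun y => hessianMatrix u y i j) z :=
  (contDiffAt_fderiv_apply (n := 1) (contDiffAt_fderiv_apply (n := 2) hu _) _).differentiableAt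
    one_ne_zero

lemma sum_fderiv_hessianMatrix {u : EuclideanSpace ℝ ι → F} (hu : ContDiffAt ℝ 3 u z) (j : ι) :
    ∑ i, fderiv ℝ (fun y => hessianMatrix u y i j) z (EuclideanSpace.single i 1) =
      fderiv ℝ (Δ u) z (EuclideanSpace.single j 1) := by
  rw [← laplacian_fderiv_apply hu, laplacian_eq_sum_fderiv_fderiv (EuclideanSpace.basisFun ι ℝ)
    (differentiableAt_fderiv_of_contDiffAt (contDiffAt_fderiv_apply hu _))]
  simp [hessianMatrix]

theorem stmt12_general {κs κp : ℂ} (hκs : κs ≠ 0) {u w : EuclideanSpace ℝ ι → ℂ}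
    (hu : ContDiffAt ℝ 3 u z) (hw : ContDiffAt ℝ 3 w z)
    (hΔu : ∀ᶠ y in 𝓝 z, Δ u y = -κs ^ 2 * u y) (hΔw : ∀ᶠ y in 𝓝 z, Δ w y = -κp ^ 2 * w y)
    (j : ι) :
    ∑ i, fderiv ℝ (fun y => elastodynamicTensor κs u w y i j) z (EuclideanSpace.single i 1) =
      (κp ^ 2 / κs ^ 2) * fderiv ℝ w z (EuclideanSpace.single j 1) := by
  have huw : ContDiffAt ℝ 3 (u - w) z := hu.sub hw
  have hentry (i : ι) : fderiv ℝ (fun y => elastodynamicTensor κs u w y i j) z =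
      (1 : Matrix ι ι ℂ) i j • fderiv ℝ u z +
        (κs ^ 2)⁻¹ • fderiv ℝ (fun y => hessianMatrix (u - w) y i j) z :=
    (((hu.differentiableAt three_ne_zero).hasFDerivAt.mul_const _).add
      ((differentiableAt_hessianMatrix_apply huw i j).hasFDerivAt.const_mul _)).fderiv
  have hidentity : ∑ i, (1 : Matrix ι ι ℂ) i j * fderiv ℝ u z (EuclideanSpace.single i 1) =
      fderiv ℝ u z (EuclideanSpace.single j 1) := by
    simp [Matrix.one_apply]
  simp only [hentry, add_apply, smul_apply, smul_eq_mul, Finset.sum_add_distrib,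
    ← Finset.mul_sum, hidentity, sum_fderiv_hessianMatrix huw, sub_apply,
    fderiv_laplacian_sub_of_eigenfunctions (hu.of_le (by norm_num)) (hw.of_le (by norm_num))
      hΔu hΔw]
  field_simp
  ring

end ElastodynamicTensor

/-- Identity from Example (Tk) of the paper: the column-wise divergence of the
elastodynamic fundamental solution equals `(κp²/κs²) ∇ g_{κp}`. -/
theorem stmt12 (κs κp : ℂ) (hκs : κs ≠ 0) (hκp : κp ≠ 0)
    (z : EuclideanSpace ℝ (Fin 3)) (hz : z ≠ 0) (j : Fin 3) :
    ∑ i : Fin 3, fderiv ℝ (fun y => Eker κs κp y i j) z (EuclideanSpace.single i 1) =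
      (κp ^ 2 / κs ^ 2) * fderiv ℝ (gker κp) z (EuclideanSpace.single j 1) := by
  rw [Eker_eq_elastodynamicTensor]
  exact stmt12_general hκs (contDiffAt_gker κs hz) (contDiffAt_gker κp hz)
    (eventually_laplacian_gker κs hz) (eventually_laplacian_gker κp hz) j
end
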